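/- arXiv:0707.3615 — 3 statements merged into one kernel-verified Lean document; each statement's English description precedes it below -/
import Mathlib

section
/- The complete bipartite graph K_{3,2} is intrinsically S¹-linked: for every injective map f from the vertices of K_{3,2} into the circle S¹, there exist two disjoint edges {a,b} and {c,d} of K_{3,2} such that f(a) and f(b) lie in different connected components of S¹ \ {f(c), f(d)}. -/
/-!
The side of a chord `cd` on which a point of the circle lies is constant on the components of the
circle minus `c` and `d`, so an edge with ends on different sides of `cd` is linked with `cd`.
Let `p` and `q` be distinct vertices with three common neighbours. By pigeonhole two of these, `x`
and `y`, lie on the same side of the chord `pq`. Exchanging the first and third vertices of a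
triangle reverses its orientation; applied to the triangles `pqx`, `pqy` and `xqy`, this shows
that it is impossible both that `p`, `y` lie on the same side of `xq` and that `p`, `x` lie on the
same side of `yq`. Hence `py` is linked with `xq`, or `px` with `yq`.
-/

/-- `f a` and `f b` lie in different connected components of `S¹ \ {f c, f d}`. -/
def NonSplitLink {V : Type*} (f : V → Circle) (a b c d : V) : Prop :=
  connectedComponentIn ({f c, f d}ᶜ : Set Circle) (f a) ≠
    connectedComponentIn ({f c, f d}ᶜ : Set Circle) (f b)

/-- A graph is intrinsically S¹-linked if for every S¹-embedding (injective map of its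
vertices to the circle) there is a pair of disjoint edges forming a non-split link. -/
def IntrinsicallyS1Linked {V : Type*} (G : SimpleGraph V) : Prop :=
  ∀ f : V → Circle, Function.Injective f →
    ∃ a b c d : V, G.Adj a b ∧ G.Adj c d ∧
      ({a, b} : Set V) ∩ ({c, d} : Set V) = ∅ ∧
      NonSplitLink f a b c d

open Complex ComplexConjugate

section Topology

variable {X Y : Type*} [TopologicalSpace X] [TopologicalSpace Y] [TotallyDisconnectedSpace Y]

lemma eq_of_connectedComponentIn_eq {F : Set X} {g : X → Y} (hg : ContinuousOn g F) {a b : X}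
    (ha : a ∈ F) (h : connectedComponentIn F a = connectedComponentIn F b) : g a = g b := by
  have haC := mem_connectedComponentIn ha
  have hbC : b ∈ connectedComponentIn F a := by
    rw [h]
    exact mem_connectedComponentIn (connectedComponentIn_nonempty_iff.mp ⟨a, h ▸ haC⟩)
  exact (isPreconnected_connectedComponentIn.image g
      (hg.mono (connectedComponentIn_subset F a))).subsingleton
    (Set.mem_image_of_mem g haC) (Set.mem_image_of_mem g hbC)

end Topology

/-- The side of the directed line from `p` to `q` on which `r` lies: `1` on the left, `-1` on the
right and `0` on the line. It is encoded as the sign of the determinant with columns `q - p` and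
`r - p`, so it is constantly `0` when `p = q`. -/
noncomputable def lineSide (p q r : ℂ) : SignType :=
  SignType.sign (conj (q - p) * (r - p)).im

lemma lineSide_reverse (p q r : ℂ) : lineSide r q p = -lineSide p q r := by
  rw [lineSide, lineSide, ← Left.sign_neg]
  congr 1
  simp only [map_sub, mul_im, sub_re, sub_im, conj_re, conj_im]
  ring

lemma lineSide_ne_or_lineSide_ne {p q x y : ℂ} (hxqy : lineSide x q y ≠ 0)
    (h : lineSide p q x = lineSide p q y) :
    lineSide x q p ≠ lineSide x q y ∨ lineSide y q p ≠ lineSide y q x := by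
  by_contra! hcon
  have hneg : lineSide x q y = -lineSide x q y := by
    calc lineSide x q y = -lineSide p q x := by rw [← hcon.1, lineSide_reverse]
      _ = lineSide y q x := by rw [h, ← lineSide_reverse, hcon.2]
      _ = -lineSide x q y := lineSide_reverse _ _ _
  exact hxqy (SignType.self_eq_neg_iff.mp hneg)

-- On the unit circle conjugation is inversion, which makes the determinant a Vandermonde product.
lemma two_mul_I_mul_im_conj_sub_mul_sub (p q r : Circle) :
    2 * I * ((conj ((q : ℂ) - p) * (r - p)).im : ℂ) =
      (q - p) * (r - q) * (p - r) / (p * q * r) := by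
  rw [im_eq_sub_conj, mul_div_cancel₀ _ (mul_ne_zero two_ne_zero I_ne_zero)]
  simp only [map_sub, map_mul, conj_conj]
  simp only [← Circle.coe_inv_eq_conj, Circle.coe_inv]
  field_simp
  ring

lemma lineSide_eq_zero_iff {p q r : Circle} :
    lineSide p q r = 0 ↔ p = q ∨ q = r ∨ r = p := by
  have hdet : lineSide p q r = 0 ↔ ((q : ℂ) - p) * (r - q) * (p - r) / (p * q * r) = 0 := by
    rw [← two_mul_I_mul_im_conj_sub_mul_sub, lineSide, sign_eq_zero_iff,
      mul_eq_zero_iff_left (mul_ne_zero two_ne_zero I_ne_zero), ofReal_eq_zero]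
  simp [hdet, sub_eq_zero, or_assoc, eq_comm, Circle.coe_inj]

lemma continuousOn_lineSide {p q : Circle} (hpq : p ≠ q) :
    ContinuousOn (fun r : Circle ↦ lineSide p q r) {p, q}ᶜ := by
  intro r hr
  have hside : lineSide p q r ≠ 0 := by
    simp only [Set.mem_compl_iff, Set.mem_insert_iff, Set.mem_singleton_iff, not_or] at hr
    simp [lineSide_eq_zero_iff, hpq, hr.1, Ne.symm hr.2]
  have hdet : Continuous fun r : Circle ↦ (conj ((q : ℂ) - p) * (r - p)).im := by fun_prop
  exact ((continuousAt_sign_of_ne_zero (sign_ne_zero.mp hside)).comp_of_eq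
    hdet.continuousAt rfl).continuousWithinAt

section Embedding

variable {V : Type*} {f : V → Circle}

lemma nonSplitLink_of_lineSide_ne (hf : Function.Injective f) {a b c d : V} (hcd : c ≠ d)
    (hac : a ≠ c) (had : a ≠ d)
    (h : lineSide (f c) (f d) (f a) ≠ lineSide (f c) (f d) (f b)) : NonSplitLink f a b c d := by
  have ha : f a ∈ ({f c, f d}ᶜ : Set Circle) := by simp [hf.eq_iff, hac, had]
  exact fun heq ↦ h (eq_of_connectedComponentIn_eq (continuousOn_lineSide (hf.ne hcd)) ha heq)

variable {G : SimpleGraph V} {p q x y : V}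

lemma exists_nonSplitLink_of_lineSide_eq (hf : Function.Injective f) (hpq : p ≠ q) (hxy : x ≠ y)
    (hx : x ∈ G.commonNeighbors p q) (hy : y ∈ G.commonNeighbors p q)
    (h : lineSide (f p) (f q) (f x) = lineSide (f p) (f q) (f y)) :
    ∃ a b c d : V, G.Adj a b ∧ G.Adj c d ∧ ({a, b} : Set V) ∩ {c, d} = ∅ ∧
      NonSplitLink f a b c d := by
  obtain ⟨hpx, hqx⟩ := G.mem_commonNeighbors.mp hx
  obtain ⟨hpy, hqy⟩ := G.mem_commonNeighbors.mp hy
  have hxqy : lineSide (f x) (f q) (f y) ≠ 0 := by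
    simp [lineSide_eq_zero_iff, hf.eq_iff, hqx.ne', hqy.ne, hxy.symm]
  rcases lineSide_ne_or_lineSide_ne hxqy h with h | h
  · refine ⟨p, y, x, q, hpy, hqx.symm, ?_, nonSplitLink_of_lineSide_ne hf hqx.ne' hpx.ne hpq h⟩
    simp [Set.eq_empty_iff_forall_notMem, hpx.ne, hpq, hxy.symm, hqy.ne']
  · refine ⟨p, x, y, q, hpx, hqy.symm, ?_, nonSplitLink_of_lineSide_ne hf hqy.ne' hpy.ne hpq h⟩
    simp [Set.eq_empty_iff_forall_notMem, hpy.ne, hpq, hxy, hqx.ne']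

lemma exists_commonNeighbors_lineSide_eq (hf : Function.Injective f) (hpq : p ≠ q)
    (hcard : 2 < (G.commonNeighbors p q).encard) :
    ∃ x ∈ G.commonNeighbors p q, ∃ y ∈ G.commonNeighbors p q, x ≠ y ∧
      lineSide (f p) (f q) (f x) = lineSide (f p) (f q) (f y) := by
  have hsides : Set.MapsTo (fun x ↦ lineSide (f p) (f q) (f x)) (G.commonNeighbors p q)
      {-1, 1} := by
    intro x hx
    have hne : lineSide (f p) (f q) (f x) ≠ 0 := by
      simp [lineSide_eq_zero_iff, hf.eq_iff, hpq, hx.1.ne', hx.2.ne]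
    rcases SignType.trichotomy (lineSide (f p) (f q) (f x)) with h | h | h <;> simp_all
  exact Set.exists_ne_map_eq_of_encard_lt_of_maps_to
    (by rwa [Set.encard_pair (by decide)]) hsides

end Embedding

lemma commonNeighbors_completeBipartiteGraph_inr {α β : Type*} (p q : β) :
    (completeBipartiteGraph α β).commonNeighbors (.inr p) (.inr q) = Set.range Sum.inl := by
  ext (x | x) <;> simp [SimpleGraph.mem_commonNeighbors]

theorem K32_intrinsically_S1_linked_general {V : Type*} {G : SimpleGraph V} {p q : V}
    (hpq : p ≠ q) (hcard : 2 < (G.commonNeighbors p q).encard) : IntrinsicallyS1Linked G := by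
  intro f hf
  obtain ⟨x, hx, y, hy, hxy, h⟩ := exists_commonNeighbors_lineSide_eq hf hpq hcard
  exact exists_nonSplitLink_of_lineSide_eq hf hpq hxy hx hy h

theorem K32_intrinsically_S1_linked :
    IntrinsicallyS1Linked (completeBipartiteGraph (Fin 3) (Fin 2)) := by
  refine K32_intrinsically_S1_linked_general (p := .inr 0) (q := .inr 1) (by simp) ?_
  rw [commonNeighbors_completeBipartiteGraph_inr]
  exact lt_of_lt_of_le (by norm_num) Sum.inl_injective.encard_range
end

section
/- For every S¹-embedding f of the complete bipartite graph K_{3,2}, the number of unordered pairs of disjoint edges of K_{3,2} that form a non-split link in f is odd (equivalently, the sum over all pairs of disjoint edges of their mod 2 linking numbers is 1 mod 2). -/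
/-- The set of unordered pairs of disjoint edges of `G` forming a non-split link in the
S¹-embedding `f`. -/
def linkedPairs {V : Type*} (G : SimpleGraph V) (f : V → Circle) : Set (Sym2 (Sym2 V)) :=
  {p | ∃ a b c d : V, p = s(s(a, b), s(c, d)) ∧ G.Adj a b ∧ G.Adj c d ∧
    ({a, b} : Set V) ∩ ({c, d} : Set V) = ∅ ∧ NonSplitLink f a b c d}

open Set Finset Complex

section Topology

variable {X : Type*} [TopologicalSpace X] {A B : Set X} {x y : X}

lemma connectedComponentIn_union_eq_left (hA : IsOpen A) (hB : IsOpen B) (hAB : Disjoint A B)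
    (hA' : IsPreconnected A) (hx : x ∈ A) : connectedComponentIn (A ∪ B) x = A := by
  refine Subset.antisymm ?_ (hA'.subset_connectedComponentIn hx subset_union_left)
  exact isPreconnected_connectedComponentIn.subset_left_of_subset_union hA hB hAB
    (connectedComponentIn_subset _ _) ⟨x, mem_connectedComponentIn (Or.inl hx), hx⟩

lemma connectedComponentIn_union_eq_iff (hA : IsOpen A) (hB : IsOpen B) (hAB : Disjoint A B)
    (hA' : IsPreconnected A) (hB' : IsPreconnected B) (hx : x ∈ A ∪ B) (hy : y ∈ A ∪ B) :
    connectedComponentIn (A ∪ B) x = connectedComponentIn (A ∪ B) y ↔ (x ∈ A ↔ y ∈ A) := by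
  have left {z : X} (hz : z ∈ A) : connectedComponentIn (A ∪ B) z = A :=
    connectedComponentIn_union_eq_left hA hB hAB hA' hz
  have right {z : X} (hz : z ∈ B) : connectedComponentIn (A ∪ B) z = B :=
    union_comm A B ▸ connectedComponentIn_union_eq_left hB hA hAB.symm hB' hz
  have hne {z : X} (hz : z ∈ A) : A ≠ B := fun h => Set.disjoint_left.1 hAB hz (h ▸ hz)
  rcases hx with hx | hx <;> rcases hy with hy | hy
  · simp only [left hx, left hy, hx, hy]
  · simp [left hx, right hy, hx, Set.disjoint_right.1 hAB hy, hne hx]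
  · simp [right hx, left hy, hy, Set.disjoint_right.1 hAB hx, (hne hy).symm]
  · simp only [right hx, right hy, Set.disjoint_right.1 hAB hx, Set.disjoint_right.1 hAB hy]

end Topology

section Circle

variable {u v z w : Circle}

lemma isOpen_compl_range_circlePath (u v : Circle) : IsOpen (range (u.path v))ᶜ :=
  (isCompact_range (u.path v).continuous).isClosed.isOpen_compl

lemma isPreconnected_compl_range_circlePath (huv : u ≠ v) :
    IsPreconnected (range (u.path v))ᶜ := by
  rw [Circle.compl_range_path huv]
  exact isPreconnected_Ioo.image _ (v.path u).continuous.continuousOn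

lemma connectedComponentIn_compl_pair_eq_iff (huv : u ≠ v) (hz : z ∈ ({u, v}ᶜ : Set Circle))
    (hw : w ∈ ({u, v}ᶜ : Set Circle)) :
    connectedComponentIn {u, v}ᶜ z = connectedComponentIn {u, v}ᶜ w ↔
      (z ∈ range (u.path v) ↔ w ∈ range (u.path v)) := by
  have hdisj : Disjoint (range (u.path v))ᶜ (range (v.path u))ᶜ := by
    rw [Set.disjoint_compl_left_iff_subset, compl_subset_iff_union, union_comm]
    exact Circle.range_path_union_range_path huv
  rw [← Circle.range_path_inter_range_path huv, compl_inter] at hz hw ⊢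
  rw [connectedComponentIn_union_eq_iff (isOpen_compl_range_circlePath u v)
    (isOpen_compl_range_circlePath v u) hdisj (isPreconnected_compl_range_circlePath huv)
    (isPreconnected_compl_range_circlePath huv.symm) hz hw]
  exact not_iff_not

lemma mem_range_circlePath_iff (h : arg u ≤ arg v) :
    z ∈ range (u.path v) ↔ arg z ∈ Set.Icc (arg u) (arg v) := by
  rw [Circle.range_path, Circle.angleDiff, if_pos h, sub_add_cancel]
  constructor
  · rintro ⟨t, ht, rfl⟩
    rwa [Circle.arg_exp ((neg_pi_lt_arg u).trans_le ht.1) (ht.2.trans (arg_le_pi v))]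
  · exact fun hz => ⟨arg z, hz, Circle.exp_arg z⟩

end Circle

section LtIndicator

variable {R : Type*} [LinearOrder R] {x y z : R}

/-- The indicator of `x < y`, with values in `ZMod 2`: the order-theoretic building block of the
mod 2 linking number. -/
def ltIndicator (x y : R) : ZMod 2 := if x < y then 1 else 0

lemma ltIndicator_swap (h : x ≠ y) : ltIndicator y x = 1 + ltIndicator x y := by
  unfold ltIndicator
  rcases h.lt_or_gt with h | h
  · rw [if_pos h, if_neg h.not_gt, CharTwo.add_self_eq_zero]
  · rw [if_pos h, if_neg h.not_gt, add_zero]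

lemma ltIndicator_add_ltIndicator (hxy : x < y) (hzx : z ≠ x) (hzy : z ≠ y) :
    ltIndicator x z + ltIndicator y z = if z ∈ Set.Icc x y then 1 else 0 := by
  unfold ltIndicator
  rcases hzx.lt_or_gt with hx | hx
  · simp [hx.not_gt, (hx.trans hxy).not_gt, hx.not_ge]
  rcases hzy.lt_or_gt with hy | hy
  · simp [hx, hx.le, hy.le, hy.not_gt]
  · simp [hx, hy, hy.not_ge, CharTwo.add_self_eq_zero]

end LtIndicator

section LinkingNumber

variable {V : Type*} {f : V → Circle} {a b c d : V}

lemma nonSplitLink_swap_left : NonSplitLink f b a c d ↔ NonSplitLink f a b c d :=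
  ne_comm

lemma nonSplitLink_swap_right : NonSplitLink f a b d c ↔ NonSplitLink f a b c d := by
  rw [NonSplitLink, NonSplitLink, Set.pair_comm]

open Classical in
/-- The mod 2 linking number of `{a, b}` and `{c, d}` in `f`, with values in `ZMod 2` so that linked
pairs can be counted modulo 2 by summation. It has its usual meaning when the pairs are disjoint. -/
noncomputable def linkingNumber (f : V → Circle) (a b c d : V) : ZMod 2 :=
  if NonSplitLink f a b c d then 1 else 0

lemma linkingNumber_eq_one_iff : linkingNumber f a b c d = 1 ↔ NonSplitLink f a b c d := by
  simp [linkingNumber]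

lemma linkingNumber_swap_right : linkingNumber f a b d c = linkingNumber f a b c d := by
  classical
  exact if_congr nonSplitLink_swap_right rfl rfl

lemma linkingNumber_eq_sum_ltIndicator (hf : Function.Injective f)
    (hcd : c ≠ d) (hac : a ≠ c) (had : a ≠ d) (hbc : b ≠ c) (hbd : b ≠ d) :
    linkingNumber f a b c d =
      ltIndicator (arg (f c)) (arg (f a)) + ltIndicator (arg (f d)) (arg (f a)) +
        (ltIndicator (arg (f c)) (arg (f b)) + ltIndicator (arg (f d)) (arg (f b))) := by
  have harg : Function.Injective fun x => arg (f x) := Circle.injective_arg.comp hf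
  wlog hlt : arg (f c) < arg (f d) generalizing c d
  · rw [← linkingNumber_swap_right, this hcd.symm had hac hbd hbc
      ((harg.ne hcd).lt_or_gt.resolve_left hlt)]
    ring
  have hlink : NonSplitLink f a b c d ↔ ¬(arg (f a) ∈ Set.Icc (arg (f c)) (arg (f d)) ↔
      arg (f b) ∈ Set.Icc (arg (f c)) (arg (f d))) := by
    rw [NonSplitLink, ne_eq, connectedComponentIn_compl_pair_eq_iff (hf.ne hcd)
      (by simp [hf.eq_iff, hac, had]) (by simp [hf.eq_iff, hbc, hbd]),
      mem_range_circlePath_iff hlt.le, mem_range_circlePath_iff hlt.le]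
  rw [ltIndicator_add_ltIndicator hlt (harg.ne hac) (harg.ne had),
    ltIndicator_add_ltIndicator hlt (harg.ne hbc) (harg.ne hbd), linkingNumber, hlink]
  split_ifs <;> first | rfl | tauto

lemma linkingNumber_comm (hf : Function.Injective f) (hab : a ≠ b) (hcd : c ≠ d)
    (hac : a ≠ c) (had : a ≠ d) (hbc : b ≠ c) (hbd : b ≠ d) :
    linkingNumber f c d a b = linkingNumber f a b c d := by
  have harg : Function.Injective fun x => arg (f x) := Circle.injective_arg.comp hf
  rw [linkingNumber_eq_sum_ltIndicator hf hab hac.symm hbc.symm had.symm hbd.symm,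
    linkingNumber_eq_sum_ltIndicator hf hcd hac had hbc hbd,
    ltIndicator_swap (harg.ne hac), ltIndicator_swap (harg.ne had),
    ltIndicator_swap (harg.ne hbc), ltIndicator_swap (harg.ne hbd)]
  linear_combination -2 * CharTwo.two_eq_zero (R := ZMod 2)

lemma nonSplitLink_comm (hf : Function.Injective f) (hab : a ≠ b) (hcd : c ≠ d)
    (hac : a ≠ c) (had : a ≠ d) (hbc : b ≠ c) (hbd : b ≠ d) :
    NonSplitLink f c d a b ↔ NonSplitLink f a b c d := by
  rw [← linkingNumber_eq_one_iff, linkingNumber_comm hf hab hcd hac had hbc hbd,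
    linkingNumber_eq_one_iff]

lemma pair_inter_pair_eq_empty_iff :
    ({a, b} ∩ {c, d} : Set V) = ∅ ↔ a ≠ c ∧ a ≠ d ∧ b ≠ c ∧ b ≠ d := by
  simp only [← Set.disjoint_iff_inter_eq_empty, Set.disjoint_insert_left,
    Set.disjoint_singleton_left, mem_insert_iff, mem_singleton_iff]
  tauto

lemma mk_mem_linkedPairs_iff {G : SimpleGraph V} (hf : Function.Injective f) :
    s(s(a, b), s(c, d)) ∈ linkedPairs G f ↔
      G.Adj a b ∧ G.Adj c d ∧ ({a, b} ∩ {c, d} : Set V) = ∅ ∧ NonSplitLink f a b c d := by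
  refine ⟨?_, fun h => ⟨a, b, c, d, rfl, h⟩⟩
  rintro ⟨a', b', c', d', heq, hab, hcd, hdisj, hlink⟩
  obtain ⟨hac, had, hbc, hbd⟩ := pair_inter_pair_eq_empty_iff.1 hdisj
  have hlink' := (nonSplitLink_comm hf hab.ne hcd.ne hac had hbc hbd).2 hlink
  simp only [Sym2.eq_iff] at heq
  rcases heq with ⟨⟨rfl, rfl⟩ | ⟨rfl, rfl⟩, ⟨rfl, rfl⟩ | ⟨rfl, rfl⟩⟩ |
    ⟨⟨rfl, rfl⟩ | ⟨rfl, rfl⟩, ⟨rfl, rfl⟩ | ⟨rfl, rfl⟩⟩ <;>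
  grind [pair_inter_pair_eq_empty_iff, nonSplitLink_swap_left, nonSplitLink_swap_right,
    SimpleGraph.adj_comm]

end LinkingNumber

section OffDiag

variable {ι M : Type*} [AddCommMonoid M]

lemma sum_offDiag_fst (s : Finset ι) (h : ι → M) :
    ∑ p ∈ s.offDiag, h p.1 = (#s - 1) • ∑ i ∈ s, h i := by
  classical
  rw [sum_finset_product s.offDiag s s.erase (by grind), Finset.smul_sum]
  exact sum_congr rfl fun i hi => by simp only [sum_const, card_erase_of_mem hi]

lemma sum_offDiag_snd (s : Finset ι) (h : ι → M) :
    ∑ p ∈ s.offDiag, h p.2 = (#s - 1) • ∑ i ∈ s, h i := by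
  classical
  rw [sum_finset_product_right s.offDiag s s.erase (by grind), Finset.smul_sum]
  exact sum_congr rfl fun i hi => by simp only [sum_const, card_erase_of_mem hi]

lemma card_filter_lt_of_injective {ι R : Type*} [Fintype ι] [LinearOrder R] {g : ι → R}
    (hg : Function.Injective g) : #{p : ι × ι | g p.1 < g p.2} = (Fintype.card ι).choose 2 := by
  let := LinearOrder.lift' g hg
  exact Fintype.card_product_filter_lt

lemma sum_ltIndicator_offDiag {R : Type*} [LinearOrder R] [Fintype ι] {g : ι → R}
    (hg : Function.Injective g) :
    ∑ p ∈ (univ : Finset ι).offDiag, ltIndicator (g p.2) (g p.1) =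
      ((Fintype.card ι).choose 2 : ZMod 2) := by
  have hfilter : (univ : Finset ι).offDiag.filter (fun p => g p.2 < g p.1) =
      ({p | g p.2 < g p.1} : Finset (ι × ι)) := by
    ext p
    simpa using fun h e => h.ne (congrArg g e.symm)
  simp only [ltIndicator, sum_boole, hfilter]
  have hcard : #{p : ι × ι | g p.2 < g p.1} = #{p : ι × ι | g p.1 < g p.2} :=
    card_equiv (Equiv.prodComm ι ι) (by simp)
  rw [hcard, card_filter_lt_of_injective hg]

end OffDiag

section CompleteBipartite

variable {α β R : Type*} [LinearOrder R] {f : α ⊕ β → Circle} {g : β → R}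

/-- The pair of edges `{x₁, y₁}`, `{x₂, y₂}` of a complete bipartite graph, given by the ends
`(x₁, x₂)` in the first part and `(y₁, y₂)` in the second. Swapping both ends gives the same pair of
edges, so each pair of disjoint edges is obtained once if `y₁` is required to precede `y₂`. -/
def edgePair (p : (α × α) × (β × β)) : Sym2 (Sym2 (α ⊕ β)) :=
  s(s(.inl p.1.1, .inr p.2.1), s(.inl p.1.2, .inr p.2.2))

lemma edgePair_swap (p : (α × α) × (β × β)) : edgePair (p.1.swap, p.2.swap) = edgePair p :=
  Sym2.eq_swap

lemma injOn_edgePair (g : β → R) :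
    InjOn (edgePair (α := α)) {p | g p.2.1 < g p.2.2} := by
  rintro ⟨⟨i, j⟩, k, l⟩ (hkl : g k < g l) ⟨⟨i', j'⟩, k', l'⟩ (hkl' : g k' < g l') heq
  rcases Sym2.eq_iff.1 heq with ⟨hfst, hsnd⟩ | ⟨hfst, hsnd⟩
  · simp_all
  · obtain ⟨-, rfl⟩ : i = j' ∧ k = l' := by simpa using hfst
    obtain ⟨-, rfl⟩ : j = i' ∧ l = k' := by simpa using hsnd
    exact absurd hkl hkl'.not_gt

lemma edgePair_mem_linkedPairs_iff (hf : Function.Injective f) {p : (α × α) × (β × β)} :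
    edgePair p ∈ linkedPairs (completeBipartiteGraph α β) f ↔
      p.1.1 ≠ p.1.2 ∧ p.2.1 ≠ p.2.2 ∧
        NonSplitLink f (.inl p.1.1) (.inr p.2.1) (.inl p.1.2) (.inr p.2.2) := by
  simp [edgePair, mk_mem_linkedPairs_iff hf, pair_inter_pair_eq_empty_iff, and_assoc]

lemma exists_eq_inl_inr_of_adj {a b : α ⊕ β} (h : (completeBipartiteGraph α β).Adj a b) :
    ∃ i k, s(a, b) = s(.inl i, .inr k) := by
  rcases a with i | k <;> rcases b with j | l <;> simp_all

lemma linkedPairs_completeBipartiteGraph_eq_image (hf : Function.Injective f)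
    (hg : Function.Injective g) :
    linkedPairs (completeBipartiteGraph α β) f = edgePair '' {p | p.1.1 ≠ p.1.2 ∧
      g p.2.1 < g p.2.2 ∧
      NonSplitLink f (.inl p.1.1) (.inr p.2.1) (.inl p.1.2) (.inr p.2.2)} := by
  refine Subset.antisymm (fun e he => ?_) ?_
  · obtain ⟨p, rfl⟩ : ∃ p, e = edgePair p := by
      obtain ⟨a, b, c, d, rfl, hab, hcd, -⟩ := he
      obtain ⟨i, k, hab⟩ := exists_eq_inl_inr_of_adj hab
      obtain ⟨j, l, hcd⟩ := exists_eq_inl_inr_of_adj hcd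
      exact ⟨((i, j), (k, l)), by rw [hab, hcd, edgePair]⟩
    wlog hlt : g p.2.1 < g p.2.2 generalizing p
    · rw [← edgePair_swap] at he ⊢
      have hne := ((edgePair_mem_linkedPairs_iff hf).1 he).2.1
      exact this _ he ((hg.ne hne).lt_or_gt.resolve_right hlt)
    obtain ⟨hp, -, hlink⟩ := (edgePair_mem_linkedPairs_iff hf).1 he
    exact ⟨p, ⟨hp, hlt, hlink⟩, rfl⟩
  · rintro _ ⟨p, ⟨hp, hlt, hlink⟩, rfl⟩
    exact (edgePair_mem_linkedPairs_iff hf).2 ⟨hp, fun h => hlt.ne (congrArg g h), hlink⟩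

variable [Fintype α]

lemma natCast_ncard_linkedPairs_completeBipartiteGraph [Fintype β] (hf : Function.Injective f)
    (hg : Function.Injective g) :
    ((linkedPairs (completeBipartiteGraph α β) f).ncard : ZMod 2) =
      ∑ q : β × β with g q.1 < g q.2, ∑ p ∈ (univ : Finset α).offDiag,
        linkingNumber f (.inl p.1) (.inr q.1) (.inl p.2) (.inr q.2) := by
  classical
  rw [linkedPairs_completeBipartiteGraph_eq_image hf hg,
    ((injOn_edgePair g).mono fun p hp => hp.2.1).ncard_image, ← sum_product_right']
  simp only [linkingNumber, sum_boole]
  rw [← ncard_coe_finset]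
  congr 2
  ext p
  simp [and_assoc]

lemma sum_linkingNumber_offDiag (hα : Odd (Fintype.card α)) (hf : Function.Injective f) {k l : β}
    (hkl : k ≠ l) :
    ∑ p ∈ (univ : Finset α).offDiag, linkingNumber f (.inl p.1) (.inr k) (.inl p.2) (.inr l) =
      ((Fintype.card α).choose 2 : ZMod 2) := by
  let θ (x : α ⊕ β) : ℝ := arg (f x)
  have hθ : Function.Injective θ := Circle.injective_arg.comp hf
  have hcard : ((#(univ : Finset α) - 1 : ℕ) : ZMod 2) = 0 :=
    ZMod.natCast_eq_zero_iff_even.2 (Nat.Odd.sub_odd hα odd_one)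
  have hlink : ∀ p ∈ (univ : Finset α).offDiag,
      linkingNumber f (.inl p.1) (.inr k) (.inl p.2) (.inr l) =
        ltIndicator (θ (.inl p.2)) (θ (.inl p.1)) +
          (ltIndicator (θ (.inr l)) (θ (.inl p.1)) + ltIndicator (θ (.inr l)) (θ (.inr k))) +
          ltIndicator (θ (.inl p.2)) (θ (.inr k)) := by
    intro p hp
    have hp' : p.1 ≠ p.2 := (mem_offDiag.1 hp).2.2
    rw [linkingNumber_eq_sum_ltIndicator hf (by simp) (by simpa) (by simp) (by simp) (by simpa)]
    ring
  rw [sum_congr rfl hlink, sum_add_distrib, sum_add_distrib,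
    sum_offDiag_fst _ fun i =>
      ltIndicator (θ (.inr l)) (θ (.inl i)) + ltIndicator (θ (.inr l)) (θ (.inr k)),
    sum_offDiag_snd _ fun j => ltIndicator (θ (.inl j)) (θ (.inr k))]
  simp only [nsmul_eq_mul, hcard, zero_mul, add_zero]
  exact sum_ltIndicator_offDiag (hθ.comp Sum.inl_injective)

end CompleteBipartite

theorem K32_odd_number_of_nonsplit_links_general {α β : Type*} [Fintype α] [Fintype β]
    (hα : Odd (Fintype.card α)) (f : α ⊕ β → Circle) (hf : Function.Injective f) :
    (linkedPairs (completeBipartiteGraph α β) f).ncard ≡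
      (Fintype.card α).choose 2 * (Fintype.card β).choose 2 [MOD 2] := by
  have hg : Function.Injective fun k : β => arg (f (.inr k)) :=
    Circle.injective_arg.comp (hf.comp Sum.inr_injective)
  rw [← ZMod.natCast_eq_natCast_iff, natCast_ncard_linkedPairs_completeBipartiteGraph hf hg]
  calc
    _ = ∑ q : β × β with arg (f (.inr q.1)) < arg (f (.inr q.2)),
          ((Fintype.card α).choose 2 : ZMod 2) := by
      refine sum_congr rfl fun q hq => sum_linkingNumber_offDiag hα hf ?_
      exact fun h => (mem_filter.1 hq).2.ne (by rw [h])
    _ = _ := by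
      rw [sum_const, card_filter_lt_of_injective hg, nsmul_eq_mul, Nat.cast_mul, mul_comm]

theorem K32_odd_number_of_nonsplit_links
    (f : Fin 3 ⊕ Fin 2 → Circle) (hf : Function.Injective f) :
    Odd (linkedPairs (completeBipartiteGraph (Fin 3) (Fin 2)) f).ncard :=
  Nat.odd_iff.2 (K32_odd_number_of_nonsplit_links_general (by decide) f hf)
end

section
/- Vertex expansion preserves intrinsic S¹-linking: if G is an intrinsically S¹-linked simple graph and G' is obtained from G by a vertex expansion, then G' is intrinsically S¹-linked. -/
/-- `G'` is obtained from `G` by expanding the vertex `v` into an edge, witnessed by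
the projection map `φ`. -/
def IsVertexExpansion {V V' : Type*} (G : SimpleGraph V) (G' : SimpleGraph V')
    (φ : V' → V) (v : V) : Prop :=
  Function.Surjective φ ∧
  (∃ v₁ v₂ : V', v₁ ≠ v₂ ∧ G'.Adj v₁ v₂ ∧ φ ⁻¹' {v} = {v₁, v₂}) ∧
  (∀ u : V, u ≠ v → ∃ x : V', φ ⁻¹' {u} = {x}) ∧
  (∀ a b : V, a ≠ b → (G.Adj a b ↔ ∃ x y : V', φ x = a ∧ φ y = b ∧ G'.Adj x y))

section Circle

theorem isPreconnected_compl_of_isPreconnected_circle {C : Set Circle} (hC : IsPreconnected C) :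
    IsPreconnected Cᶜ := by
  refine isPreconnected_of_forall_pair fun p hp q hq ↦ ?_
  obtain rfl | hpq := eq_or_ne p q
  · exact ⟨{p}, by simpa using hp, rfl, rfl, isPreconnected_singleton⟩
  have arc_avoids : Disjoint (Set.range (Circle.path p q)) C ∨
      Disjoint (Set.range (Circle.path q p)) C := by
    by_contra! ⟨hpqC, hqpC⟩
    rw [Set.not_disjoint_iff_nonempty_inter, Set.inter_comm] at hpqC hqpC
    obtain ⟨z, hzC, hz⟩ := isPreconnected_closed_iff.1 hC _ _
      (isCompact_range (Circle.path p q).continuous).isClosed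
      (isCompact_range (Circle.path q p).continuous).isClosed
      ((Set.subset_univ C).trans_eq (Circle.range_path_union_range_path hpq).symm) hpqC hqpC
    rw [Circle.range_path_inter_range_path hpq] at hz
    obtain rfl | rfl := hz
    exacts [hp hzC, hq hzC]
  obtain h | h := arc_avoids
  · exact ⟨_, h.subset_compl_right, (Circle.path p q).source_mem_range,
      (Circle.path p q).target_mem_range, isPreconnected_range (Circle.path p q).continuous⟩
  · exact ⟨_, h.subset_compl_right, (Circle.path q p).target_mem_range,
      (Circle.path q p).source_mem_range, isPreconnected_range (Circle.path q p).continuous⟩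

theorem connectedComponentIn_compl_pair_eq_symm {p q r s : Circle}
    (hdisj : Disjoint ({p, q} : Set Circle) {r, s})
    (h : connectedComponentIn ({p, q}ᶜ : Set Circle) r = connectedComponentIn {p, q}ᶜ s) :
    connectedComponentIn ({r, s}ᶜ : Set Circle) p = connectedComponentIn {r, s}ᶜ q := by
  set C := connectedComponentIn ({p, q}ᶜ : Set Circle) r
  have hrs : {r, s} ⊆ C := Set.pair_subset
    (mem_connectedComponentIn (hdisj.subset_compl_left (by simp)))
    (h ▸ mem_connectedComponentIn (hdisj.subset_compl_left (by simp)))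
  have hpq : {p, q} ⊆ Cᶜ := Set.subset_compl_comm.1 (connectedComponentIn_subset _ _)
  have hCc : IsPreconnected Cᶜ :=
    isPreconnected_compl_of_isPreconnected_circle isPreconnected_connectedComponentIn
  exact connectedComponentIn_eq <| hCc.subset_connectedComponentIn (hpq (by simp))
    (Set.compl_subset_compl.2 hrs) (hpq (by simp))

theorem NonSplitLink.symm {V : Type*} {f : V → Circle} {a b c d : V}
    (h : NonSplitLink f a b c d) (hf : Function.Injective f)
    (hdisj : Disjoint ({a, b} : Set V) {c, d}) : NonSplitLink f c d a b := by
  have himage : Disjoint ({f a, f b} : Set Circle) {f c, f d} := by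
    simpa only [Set.image_pair] using (Set.disjoint_image_iff hf).2 hdisj
  exact fun heq ↦ h (connectedComponentIn_compl_pair_eq_symm himage heq)

end Circle

section Minor

variable {V W : Type*} {G : SimpleGraph V} {H : SimpleGraph W} {B : V → Set W}

/-- `B` exhibits `G` as a minor of `H`: contracting each branch set `B u` to a point and deleting
the other vertices and superfluous edges of `H` leaves `G`. The branch sets need not cover `H`. -/
structure IsMinorModel (G : SimpleGraph V) (H : SimpleGraph W) (B : V → Set W) : Prop where
  connected : ∀ u, (H.induce (B u)).Connected
  pairwise_disjoint : Pairwise (Function.onFun Disjoint B)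
  exists_adj : ∀ ⦃a b⦄, G.Adj a b → ∃ x ∈ B a, ∃ y ∈ B b, H.Adj x y

theorem exists_adj_ne_of_preconnected_induce {α : Type*} {S : Set W}
    (hS : (H.induce S).Preconnected) (g : W → α) {x y : W} (hx : x ∈ S) (hy : y ∈ S)
    (hxy : g x ≠ g y) : ∃ z ∈ S, ∃ w ∈ S, H.Adj z w ∧ g z ≠ g w := by
  obtain ⟨p⟩ := hS ⟨x, hx⟩ ⟨y, hy⟩
  obtain ⟨e, -, hfst, hsnd⟩ := p.exists_boundary_dart {z | g z = g x} rfl hxy.symm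
  exact ⟨e.fst, e.fst.2, e.snd, e.snd.2, e.adj, fun heq ↦ hsnd (heq.symm.trans hfst)⟩

namespace IsMinorModel

theorem preconnected_induce_union (hB : IsMinorModel G H B) {a b : V} (hab : G.Adj a b) :
    (H.induce (B a ∪ B b)).Preconnected := by
  obtain ⟨x, hx, y, hy, hxy⟩ := hB.exists_adj hab
  exact (SimpleGraph.connected_induce_union (hB.connected a).preconnected
    (hB.connected b).preconnected hx hy hxy).preconnected

theorem disjoint_union (hB : IsMinorModel G H B) {a b c d : V}
    (hdisj : Disjoint ({a, b} : Set V) {c, d}) : Disjoint (B a ∪ B b) (B c ∪ B d) := by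
  have hne {u v : V} (hu : u ∈ ({a, b} : Set V)) (hv : v ∈ ({c, d} : Set V)) :
      Disjoint (B u) (B v) := hB.pairwise_disjoint (hdisj.ne_of_mem hu hv)
  simp only [Set.disjoint_union_left, Set.disjoint_union_right]
  exact ⟨⟨hne (by simp) (by simp), hne (by simp) (by simp)⟩,
    ⟨hne (by simp) (by simp), hne (by simp) (by simp)⟩⟩

theorem exists_adj_nonSplitLink (hB : IsMinorModel G H B) {f : W → Circle} {a b : V}
    (hab : G.Adj a b) {x y z w : W} (hx : x ∈ B a) (hy : y ∈ B b)
    (hlink : NonSplitLink f x y z w) :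
    ∃ x' y', H.Adj x' y' ∧ {x', y'} ⊆ B a ∪ B b ∧ NonSplitLink f x' y' z w := by
  obtain ⟨x', hx', y', hy', hadj, hne⟩ := exists_adj_ne_of_preconnected_induce
    (hB.preconnected_induce_union hab) (fun u ↦ connectedComponentIn {f z, f w}ᶜ (f u))
    (.inl hx) (.inr hy) hlink
  exact ⟨x', y', hadj, Set.pair_subset hx' hy', hne⟩

end IsMinorModel

theorem IsVertexExpansion.isMinorModel {φ : W → V} {v : V} (h : IsVertexExpansion G H φ v) :
    IsMinorModel G H (fun u ↦ φ ⁻¹' {u}) := by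
  obtain ⟨-, ⟨v₁, v₂, -, hadj, hfibre⟩, hsingle, hedge⟩ := h
  refine ⟨fun u ↦ ?_, fun a b hab ↦ (Set.disjoint_singleton.2 hab).preimage φ, fun a b hab ↦ ?_⟩
  · obtain rfl | hu := eq_or_ne u v
    · rw [hfibre]
      exact SimpleGraph.induce_pair_connected_of_adj hadj
    · obtain ⟨x, hx⟩ := hsingle u hu
      rw [hx]
      exact .of_subsingleton
  · obtain ⟨x, y, hx, hy, hxy⟩ := (hedge a b hab.ne).1 hab
    exact ⟨x, hx, y, hy, hxy⟩

theorem vertex_expansion_preserves_intrinsic_S1_linking_general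
    (hB : IsMinorModel G H B) (hG : IntrinsicallyS1Linked G) : IntrinsicallyS1Linked H := by
  intro f hf
  choose s hs using fun u ↦ Set.nonempty_coe_sort.1 (hB.connected u).nonempty
  have hs_inj : Function.Injective s := fun u v huv ↦ by_contra fun hne ↦
    (hB.pairwise_disjoint hne).ne_of_mem (hs u) (hs v) huv
  obtain ⟨a, b, c, d, hab, hcd, hdisj, hlink⟩ := hG (f ∘ s) (hf.comp hs_inj)
  have hbranch : Disjoint (B a ∪ B b) (B c ∪ B d) :=
    hB.disjoint_union (Set.disjoint_iff_inter_eq_empty.2 hdisj)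
  obtain ⟨x, y, hxy, hxy_mem, hlink_xy⟩ := hB.exists_adj_nonSplitLink hab (hs a) (hs b) hlink
  have hlink_cd : NonSplitLink f (s c) (s d) x y := hlink_xy.symm hf
    (hbranch.mono hxy_mem (Set.pair_subset (.inl (hs c)) (.inr (hs d))))
  obtain ⟨z, w, hzw, hzw_mem, hlink_zw⟩ := hB.exists_adj_nonSplitLink hcd (hs c) (hs d) hlink_cd
  exact ⟨z, w, x, y, hzw, hxy, (hbranch.symm.mono hzw_mem hxy_mem).inter_eq, hlink_zw⟩

end Minor

theorem vertex_expansion_preserves_intrinsic_S1_linking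
    {V V' : Type*} (G : SimpleGraph V) (G' : SimpleGraph V')
    (φ : V' → V) (v : V)
    (hexp : IsVertexExpansion G G' φ v)
    (hG : IntrinsicallyS1Linked G) :
    IntrinsicallyS1Linked G' :=
  vertex_expansion_preserves_intrinsic_S1_linking_general hexp.isMinorModel hG
end
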